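/- Let V be a finite-dimensional complex symplectic vector space and Γ ⊆ Sp(V) a finite subgroup with V^Γ = 0. Then the graded Poisson algebra ℂ[V]^Γ has no nonzero Poisson derivation that is homogeneous of negative degree: if D is a ℂ-linear derivation of ℂ[V]^Γ with D{f,g} = {Df,g} + {f,Dg} and D(ℂ[V]^Γ_i) ⊆ ℂ[V]^Γ_{i−k} for all i, for some fixed k ≥ 1, then D = 0. -/

import Mathlib

set_option synthInstance.maxHeartbeats 1000000
set_option maxHeartbeats 1000000
open MvPolynomial

/-- `ℂ[V]` for `V = ℂ^{2n}` in Darboux coordinates indexed by `Fin n ⊕ Fin n`. -/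
abbrev Pn (n : ℕ) : Type := MvPolynomial (Fin n ⊕ Fin n) ℂ

/-- `V = ℂ^{2n}`. -/
abbrev Vn (n : ℕ) : Type := (Fin n ⊕ Fin n) → ℂ

/-- matrices acting on `V`. -/
abbrev Mn (n : ℕ) : Type := Matrix (Fin n ⊕ Fin n) (Fin n ⊕ Fin n) ℂ

/-- the general linear group of `V`. -/
abbrev GLn (n : ℕ) := Matrix.GeneralLinearGroup (Fin n ⊕ Fin n) ℂ

/-- The standard Poisson bracket on `ℂ[V]`:
`{f,g} = Σ_i (∂f/∂x_i ∂g/∂y_i − ∂f/∂y_i ∂g/∂x_i)`. -/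
noncomputable def pbracket (n : ℕ) (f g : Pn n) : Pn n :=
  ∑ i : Fin n,
    (pderiv (Sum.inl i) f * pderiv (Sum.inr i) g -
      pderiv (Sum.inr i) f * pderiv (Sum.inl i) g)

/-- Substitution of a linear change of variables: `substG n A f = f ∘ A` as polynomial
functions, i.e. `X j ↦ Σ_k A j k • X k`. -/
noncomputable def substG (n : ℕ) (A : Mn n) : Pn n →ₐ[ℂ] Pn n :=
  aeval fun j => ∑ k, A j k • X k

/-- The invariants `ℂ[V]^Γ` of a subgroup `Γ ⊆ GL(V)`. -/
noncomputable def invariants (n : ℕ) (Γ : Subgroup (GLn n)) : Subalgebra ℂ (Pn n) where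
  carrier := {f | ∀ γ ∈ Γ, substG n ((γ : GLn n) : Mn n) f = f}
  mul_mem' := fun {a b} ha hb γ hγ => by rw [map_mul, ha γ hγ, hb γ hγ]
  one_mem' := fun γ hγ => map_one _
  add_mem' := fun {a b} ha hb γ hγ => by rw [map_add, ha γ hγ, hb γ hγ]
  zero_mem' := fun γ hγ => map_zero _
  algebraMap_mem' := fun c γ hγ => (substG n ((γ : GLn n) : Mn n)).commutes c

/-! Write `S = ℂ[V]` and `A = S^Γ`. A finite subgroup of `Sp(V)` has no pseudoreflections, so no
`γ ≠ 1` in `Γ` fixes a hypersurface pointwise and `S` is unramified over `A` in codimension one.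
A derivation of `A` extends uniquely to the fraction field of `S`; the extension has no pole along
any prime divisor, hence, `S` being factorial, it is a derivation `E` of `S`. By uniqueness `E`
commutes with `Γ` and inherits the degree `-k`. So `E` maps coordinate functions to polynomials of
degree `1 - k ≤ 0`: it is differentiation along a constant vector, which is fixed by `Γ` and
therefore vanishes. -/

section DerivationExtension

theorem exists_derivation_extension_of_formallyEtale {R A B M : Type*} [CommRing R] [CommRing A]
    [CommRing B] [Algebra R A] [Algebra R B] [Algebra A B] [IsScalarTower R A B]
    [Algebra.FormallyEtale A B] [AddCommGroup M] [Module R M] [Module A M] [Module B M]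
    [IsScalarTower R A M] [IsScalarTower R B M] [IsScalarTower A B M] (d : Derivation R A M) :
    ∃ e : Derivation R B M, ∀ a, e (algebraMap A B a) = d a := by
  let e := KaehlerDifferential.tensorKaehlerEquivOfFormallyEtale R A B
  refine ⟨((d.liftKaehlerDifferential.liftBaseChange B).comp e.symm.toLinearMap).compDer
    (KaehlerDifferential.D R B), fun a => ?_⟩
  have he := KaehlerDifferential.tensorKaehlerEquivOfFormallyEtale_symm_D_algebraMap R A B a
  simp [e, he]

theorem formallyEtale_of_isAlgebraic_of_charZero (A L : Type*) [CommRing A] [IsDomain A]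
    [CharZero A] [Field L] [Algebra A L] [FaithfulSMul A L] [Algebra.IsAlgebraic A L] :
    Algebra.FormallyEtale A L := by
  let _ : Algebra (FractionRing A) L := FractionRing.liftAlgebra A L
  have : Algebra.IsAlgebraic (FractionRing A) L :=
    (IsFractionRing.comap_isAlgebraic_iff (A := A)).1 inferInstance
  have : CharZero (FractionRing A) :=
    charZero_of_injective_algebraMap (IsFractionRing.injective A (FractionRing A))
  have : Algebra.FormallyEtale (FractionRing A) L := .of_isSeparable _ _
  have : Algebra.FormallyEtale A (FractionRing A) := .of_isLocalization (nonZeroDivisors A)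
  exact .comp A (FractionRing A) L

theorem exists_derivation_of_algebraMap_eq_zero {R A S M : Type*} [CommRing R] [CommRing A]
    [CommRing S] [Algebra R S] [Algebra A S] [AddCommGroup M] [Module R M] [Module A M]
    [Module S M] [IsScalarTower A S M] (E : Derivation R S M)
    (hE : ∀ a, E (algebraMap A S a) = 0) :
    ∃ E' : Derivation A S M, ∀ s, E' s = E s := by
  refine ⟨Derivation.mk'
    { toFun := E, map_add' := map_add E, map_smul' := fun a s => ?_ } E.leibniz, fun s => rfl⟩
  simp [Algebra.smul_def, hE]

theorem exists_derivation_of_forall_mem_range {R S L : Type*} [CommRing R] [CommRing S]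
    [CommRing L] [Algebra R S] [Algebra R L] [Algebra S L] [IsScalarTower R S L]
    [FaithfulSMul S L] (F : Derivation R S L) (hF : ∀ s, F s ∈ (algebraMap S L).range) :
    ∃ E : Derivation R S S, ∀ s, algebraMap S L (E s) = F s := by
  choose E hE using hF
  have hinj := FaithfulSMul.algebraMap_injective S L
  exact ⟨Derivation.mk'
    { toFun := E
      map_add' := fun s t => hinj (by simp [hE])
      map_smul' := fun r s => hinj <| by
        rw [hE, Derivation.map_smul, ← hE]
        exact (map_smul (IsScalarTower.toAlgHom R S L) r (E s)).symm }
    fun s t => hinj (by simp [hE, Algebra.smul_def]), hE⟩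

end DerivationExtension

theorem mem_range_algebraMap_of_forall_prime {S L : Type*} [CommRing S] [IsDomain S]
    [UniqueFactorizationMonoid S] [Field L] [Algebra S L] [IsFractionRing S L] (z : L)
    (hz : ∀ π : S, Prime π → ∃ c, ¬ π ∣ c ∧ c • z ∈ (algebraMap S L).range) :
    z ∈ (algebraMap S L).range := by
  refine IsFractionRing.isInteger_of_isUnit_den (by_contra fun hden => ?_)
  obtain ⟨π, hirr, hπden⟩ := WfDvdMonoid.exists_irreducible_factor hden
    (nonZeroDivisors.ne_zero (IsFractionRing.den S z).2)
  obtain ⟨c, hπc, s, hs⟩ := hz π hirr.prime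
  have hcz : c * IsFractionRing.num S z = s * (IsFractionRing.den S z : S) := by
    apply IsFractionRing.injective S L
    have hz' := IsFractionRing.mk'_num_den S z
    rw [IsLocalization.mk'_eq_iff_eq_mul] at hz'
    rw [map_mul, map_mul, hz', hs, Algebra.smul_def, mul_assoc]
  rcases hirr.prime.dvd_or_dvd (hcz ▸ hπden.mul_left s) with hdvd | hdvd
  · exact hπc hdvd
  · exact hirr.prime.not_isUnit (IsFractionRing.num_den_reduced S z hdvd hπden)

section InvariantDerivation

open MulSemiringAction

variable {A S G : Type*} [CommRing A] [CommRing S] [Algebra A S] [Group G]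
  [MulSemiringAction G S]

theorem eval_derivative_charpoly [Fintype G] [DecidableEq G] (t : S) :
    (Polynomial.derivative (charpoly G t)).eval t =
      ∏ g ∈ (Finset.univ : Finset G).erase 1, (t - g • t) := by
  rw [charpoly_eq, ← Finset.mul_prod_erase _ _ (Finset.mem_univ (1 : G)),
    Polynomial.derivative_mul]
  simp [Polynomial.eval_prod]

theorem prod_sub_smul_smul_derivation_eq_zero [Fintype G] [DecidableEq G]
    [Algebra.IsInvariant A S G] {M : Type*} [AddCommGroup M] [Module A M] [Module S M]
    (E : Derivation A S M) (t : S) :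
    (∏ g ∈ (Finset.univ : Finset G).erase 1, (t - g • t)) • E t = 0 := by
  obtain ⟨P, hP⟩ := Algebra.IsInvariant.charpoly_mem_lifts A S G t
  rw [Polynomial.coe_mapRingHom] at hP
  have hPt : Polynomial.aeval t P = 0 := by
    rw [Polynomial.aeval_def, ← Polynomial.eval_map, hP, eval_charpoly]
  rw [← eval_derivative_charpoly, ← hP, Polynomial.derivative_map, Polynomial.eval_map,
    ← Polynomial.aeval_def, ← Derivation.map_aeval, hPt, map_zero]

-- A generic `t` in the infinite field `K` avoids the congruences `g • t ≡ t` modulo `p`.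
theorem exists_notMem_smul_derivation_eq_zero (K : Type*) [Field K] [Infinite K] [Algebra K A]
    [Finite G] [Algebra.IsInvariant A S G] [SMulCommClass G A S] {M : Type*} [AddCommGroup M]
    [Module A M] [Module S M] [IsScalarTower A S M] {p : Ideal S} [p.IsPrime]
    (hp : p.inertia G = ⊥) (E : Derivation A S M) (t : S) :
    ∃ c ∉ p, c • E t = 0 := by
  classical
  cases nonempty_fintype G
  let _ : Module K S := Module.compHom S (algebraMap K A)
  have : IsScalarTower K A S := .of_algebraMap_smul fun _ _ => rfl
  let U : Submodule A S :=
    ((Submodule.torsion' S M p.primeCompl).restrictScalars A).comap E.toLinearMap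
  let W (g : G) : Submodule A S :=
    (p.restrictScalars A).comap (DistribSMul.toLinearMap A S g - LinearMap.id)
  have mem_U (s : S) : s ∈ U ↔ ∃ c ∉ p, c • E s = 0 := by
    simp [U, Submodule.mem_torsion'_iff, Submonoid.smul_def, Ideal.mem_primeCompl_iff]
  have mem_W (g : G) (s : S) : s ∈ W g ↔ g • s - s ∈ p := by simp [W]
  have W_ne_top {g : G} (hg : g ≠ 1) : W g ≠ ⊤ := fun htop =>
    hg <| Subgroup.mem_bot.1 <| hp ▸ fun s => (mem_W g s).1 (htop ▸ Submodule.mem_top)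
  rw [← mem_U]
  suffices hU : U.restrictScalars K = ⊤ by
    exact SetLike.ext_iff.1 hU t |>.2 Submodule.mem_top
  by_contra hU
  let s : Finset (Subspace K S) :=
    insert (U.restrictScalars K)
      ((Finset.univ.erase (1 : G)).image fun g => (W g).restrictScalars K)
  have hs : ⊤ ∉ s := by
    simpa [s, Ne.symm hU, eq_comm] using fun g hg => W_ne_top hg
  obtain ⟨v, hv⟩ := (Set.ne_univ_iff_exists_notMem _).1 (Subspace.biUnion_ne_univ_of_top_notMem hs)
  have hv' : v ∉ U ∧ ∀ g : G, g ≠ 1 → v ∉ W g := by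
    simpa [s] using hv
  refine hv'.1 ((mem_U v).2
    ⟨_, fun hprod => ?_, prod_sub_smul_smul_derivation_eq_zero (G := G) E v⟩)
  obtain ⟨g, hg, hgv⟩ := (Ideal.IsPrime.prod_mem_iff).1 hprod
  exact hv'.2 g (Finset.ne_of_mem_erase hg) ((mem_W g v).2 (by rwa [← neg_mem_iff, neg_sub]))

theorem derivation_eq_of_eq_on_algebraMap (K : Type*) [Field K] [Infinite K] [Algebra K A]
    [Algebra K S] [IsDomain S] [Finite G] [FaithfulSMul G S] [Algebra.IsInvariant A S G]
    [SMulCommClass G A S] {E₁ E₂ : Derivation K S S}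
    (h : ∀ a, E₁ (algebraMap A S a) = E₂ (algebraMap A S a)) : E₁ = E₂ := by
  obtain ⟨E, hE⟩ := exists_derivation_of_algebraMap_eq_zero (A := A) (E₁ - E₂)
    fun a => by simp [h]
  have hbot : (⊥ : Ideal S).inertia G = ⊥ := (Subgroup.eq_bot_iff_forall _).2 fun g hg =>
    FaithfulSMul.eq_of_smul_eq_smul fun s : S => by simpa [sub_eq_zero] using hg s
  ext s
  obtain ⟨c, hc, hcE⟩ := exists_notMem_smul_derivation_eq_zero K hbot E s
  have hEs : E s = 0 := (smul_eq_zero.1 hcE).resolve_left hc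
  rwa [hE, Derivation.sub_apply, sub_eq_zero] at hEs

theorem exists_derivation_lift_of_inertia_eq_bot {K : Type*} [Field K] [CharZero K] [Algebra K A]
    [Algebra K S] [IsScalarTower K A S] [IsDomain S] [UniqueFactorizationMonoid S]
    [FaithfulSMul A S] [Finite G] [Algebra.IsInvariant A S G] [SMulCommClass G A S]
    (hG : ∀ π : S, Prime π → (Ideal.span {π}).inertia G = ⊥) (d : Derivation K A S) :
    ∃ E : Derivation K S S, ∀ a, E (algebraMap A S a) = d a := by
  let L := FractionRing S
  have : IsDomain A := (FaithfulSMul.algebraMap_injective A S).isDomain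
  have : CharZero A := charZero_of_injective_algebraMap (algebraMap K A).injective
  have : FaithfulSMul A L := .trans A S L
  have : Algebra.IsIntegral A S := Algebra.IsInvariant.isIntegral A S G
  have : Algebra.IsAlgebraic A L := (IsFractionRing.isAlgebraic_iff' A S L).1 inferInstance
  have : Algebra.FormallyEtale A L := formallyEtale_of_isAlgebraic_of_charZero A L
  obtain ⟨F, hF⟩ := exists_derivation_extension_of_formallyEtale (B := L)
    (((Algebra.linearMap S L).restrictScalars A).compDer d)
  -- `F` preserves `S` iff its class modulo `S` vanishes; that class is zero on `A`.
  let polar : Derivation K S (L ⧸ LinearMap.range (Algebra.linearMap S L)) :=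
    (Submodule.mkQ _).compDer (F.compAlgebraMap S)
  have polar_algebraMap (a : A) : polar (algebraMap A S a) = 0 := by
    have hFa : F (algebraMap S L (algebraMap A S a)) = algebraMap S L (d a) := by
      rw [← IsScalarTower.algebraMap_apply, hF]; rfl
    simp [polar, hFa, Submodule.Quotient.mk_eq_zero]
  obtain ⟨polar', hpolar'⟩ := exists_derivation_of_algebraMap_eq_zero polar polar_algebraMap
  have hrange (s : S) : F (algebraMap S L s) ∈ (algebraMap S L).range := by
    refine mem_range_algebraMap_of_forall_prime _ fun π hπ => ?_
    have := (Ideal.span_singleton_prime hπ.ne_zero).2 hπ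
    obtain ⟨c, hc, hcF⟩ := exists_notMem_smul_derivation_eq_zero K (hG π hπ) polar' s
    rw [Ideal.mem_span_singleton] at hc
    rw [hpolar'] at hcF
    exact ⟨c, hc, by simpa [polar, ← Submodule.Quotient.mk_smul] using hcF⟩
  obtain ⟨E, hE⟩ := exists_derivation_of_forall_mem_range (F.compAlgebraMap S) hrange
  refine ⟨E, fun a => FaithfulSMul.algebraMap_injective S L ?_⟩
  rw [hE, Derivation.compAlgebraMap_apply, ← IsScalarTower.algebraMap_apply, hF]
  simp

theorem smul_map_derivation_eq {K : Type*} [Field K] [Infinite K] [Algebra K A] [Algebra K S]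
    [IsDomain S] [Finite G] [FaithfulSMul G S] [Algebra.IsInvariant A S G] [SMulCommClass G A S]
    (e : S ≃ₐ[K] S) (c : K) (E : Derivation K S S)
    (h : ∀ a, c • e (E (algebraMap A S a)) = E (e (algebraMap A S a))) (s : S) :
    c • e (E s) = E (e s) := by
  let conj : Derivation K S S :=
    Derivation.mk' (e.symm.toLinearMap ∘ₗ E.toLinearMap ∘ₗ e.toLinearMap) (by simp)
  have conj_apply (s : S) : conj s = e.symm (E (e s)) := rfl
  have hconj : c • E = conj := derivation_eq_of_eq_on_algebraMap (A := A) (G := G) K fun a => by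
    rw [conj_apply, ← h, map_smul, e.symm_apply_apply, Derivation.smul_apply]
  rw [← e.apply_symm_apply (E (e s)), ← conj_apply, ← hconj, Derivation.smul_apply, map_smul]

end InvariantDerivation

section LinearSubst

variable {σ R : Type*} [Fintype σ] [CommSemiring R]

/-- The pullback `f ↦ f ∘ A` of polynomial functions along the linear map `A`. -/
noncomputable def linearSubst (A : Matrix σ σ R) : MvPolynomial σ R →ₐ[R] MvPolynomial σ R :=
  aeval fun j => ∑ k, A j k • X k

theorem linearSubst_X (A : Matrix σ σ R) (j : σ) : linearSubst A (X j) = ∑ k, A j k • X k :=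
  aeval_X _ j

theorem coeff_single_linearSubst_X (A : Matrix σ σ R) (j k : σ) :
    coeff (Finsupp.single k 1) (linearSubst A (X j)) = A j k := by
  classical
  simp [linearSubst_X, coeff_sum, coeff_X, Finsupp.single_left_inj]

theorem linearSubst_one [DecidableEq σ] (f : MvPolynomial σ R) : linearSubst 1 f = f := by
  have hid : linearSubst (1 : Matrix σ σ R) = AlgHom.id R _ := by
    ext1 j
    simp [linearSubst_X, Matrix.one_apply]
  rw [hid, AlgHom.id_apply]

theorem linearSubst_linearSubst (A B : Matrix σ σ R) (f : MvPolynomial σ R) :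
    linearSubst B (linearSubst A f) = linearSubst (A * B) f := by
  have hcomp : (linearSubst B).comp (linearSubst A) = linearSubst (A * B) := by
    ext1 j
    simp only [AlgHom.comp_apply, linearSubst_X, map_sum, map_smul, Matrix.mul_apply,
      Finset.smul_sum, Finset.sum_smul, smul_smul]
    exact Finset.sum_comm
  rw [← hcomp, AlgHom.comp_apply]

theorem isHomogeneous_linearSubst_X (A : Matrix σ σ R) (j : σ) :
    (linearSubst A (X j)).IsHomogeneous 1 := by
  rw [linearSubst_X]
  exact .sum _ _ _ fun k _ => by simpa [smul_eq_C_mul] using isHomogeneous_C_mul_X (A j k) k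

theorem isHomogeneous_linearSubst (A : Matrix σ σ R) {f : MvPolynomial σ R} {i : ℕ}
    (hf : f.IsHomogeneous i) : (linearSubst A f).IsHomogeneous i := by
  simpa [linearSubst] using hf.aeval (fun j => linearSubst A (X j)) (isHomogeneous_linearSubst_X A)

theorem homogeneousComponent_linearSubst (A : Matrix σ σ R) (i : ℕ) (f : MvPolynomial σ R) :
    homogeneousComponent i (linearSubst A f) = linearSubst A (homogeneousComponent i f) := by
  induction f using MvPolynomial.induction_on' with
  | monomial u a =>
    have hu : (monomial u a).IsHomogeneous u.degree := isHomogeneous_monomial a rfl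
    rw [homogeneousComponent_of_mem hu,
      homogeneousComponent_of_mem (isHomogeneous_linearSubst A hu), apply_ite (linearSubst A),
      map_zero]
  | add p q hp hq => simp only [map_add, hp, hq]

theorem linearSubst_scalar_monomial [DecidableEq σ] (c : R) (v : σ →₀ ℕ) (a : R) :
    linearSubst (Matrix.scalar σ c) (monomial v a) = c ^ v.degree • monomial v a := by
  have hX (j : σ) : linearSubst (Matrix.scalar σ c) (X j) = c • X j := by
    simp [linearSubst_X, Matrix.diagonal_apply]
  simp only [monomial_eq, Finsupp.prod, ← algebraMap_eq, map_mul, AlgHom.commutes, map_prod,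
    map_pow, hX, smul_pow, Finset.prod_smul, Finset.prod_pow_eq_pow_sum, Finsupp.degree_apply,
    mul_smul_comm]

theorem coeff_linearSubst_scalar [DecidableEq σ] (c : R) (f : MvPolynomial σ R) (u : σ →₀ ℕ) :
    coeff u (linearSubst (Matrix.scalar σ c) f) = c ^ u.degree * coeff u f := by
  induction f using MvPolynomial.induction_on' with
  | monomial v a =>
    rw [linearSubst_scalar_monomial, coeff_smul, smul_eq_mul, coeff_monomial]
    split_ifs with h <;> simp [h]
  | add p q hp hq => simp only [map_add, coeff_add, hp, hq, mul_add]

theorem linearSubst_scalar_of_isHomogeneous [DecidableEq σ] (c : R) {f : MvPolynomial σ R} {i : ℕ}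
    (hf : f.IsHomogeneous i) : linearSubst (Matrix.scalar σ c) f = c ^ i • f := by
  ext u
  rw [coeff_linearSubst_scalar, coeff_smul, smul_eq_mul]
  rcases eq_or_ne u.degree i with rfl | hu
  · rfl
  · rw [hf.coeff_eq_zero hu, mul_zero, mul_zero]

end LinearSubst

section Pseudoreflection

variable {σ K : Type*} [Fintype σ] [DecidableEq σ]

/-- Pseudoreflections of `K^σ`: the matrices `A` such that `A - 1` has rank one. Neither finite
order nor diagonalizability is demanded, so transvections are included. -/
def IsPseudoreflection [CommRing K] (A : Matrix σ σ K) : Prop :=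
  (A - 1).rank = 1

theorem exists_eq_vecMulVec_of_rank_eq_one {m n : Type*} [Fintype n] [Field K]
    {B : Matrix m n K} (hB : B.rank = 1) : ∃ c l, B = Matrix.vecMulVec c l := by
  classical
  obtain ⟨c, -, hc⟩ := finrank_eq_one_iff'.1 hB
  choose l hl using fun j => hc ⟨B.mulVecLin (Pi.single j 1), LinearMap.mem_range_self _ _⟩
  refine ⟨c, l, Matrix.ext fun i j => ?_⟩
  have hij := congrFun (congrArg Subtype.val (hl j)) i
  simpa [Matrix.vecMulVec_apply, mul_comm, eq_comm] using hij

theorem one_add_pow_of_mul_self_eq_zero {R : Type*} [Semiring R] {x : R} (hx : x * x = 0) (m : ℕ) :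
    (1 + x) ^ m = 1 + m • x := by
  induction m with
  | zero => simp
  | succ m ih =>
    rw [pow_succ, ih, mul_add, mul_one, add_mul, smul_mul_assoc, hx, smul_zero, one_mul,
      add_zero, succ_nsmul, add_assoc]

theorem isOfFinOrder_val_of_mem {M : Type*} [Monoid M] {Γ : Subgroup Mˣ} [Finite Γ] {γ : Mˣ}
    (hγ : γ ∈ Γ) : IsOfFinOrder γ.val :=
  ((Units.coeHom M).comp Γ.subtype).isOfFinOrder (isOfFinOrder_of_finite (⟨γ, hγ⟩ : Γ))

theorem not_isPseudoreflection_of_det_eq_one [Field K] [CharZero K] {A : Matrix σ σ K}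
    (hdet : A.det = 1) (hA : IsOfFinOrder A) : ¬ IsPseudoreflection A := by
  intro hrefl
  obtain ⟨c, l, hcl⟩ := exists_eq_vecMulVec_of_rank_eq_one hrefl
  obtain rfl : A = 1 + Matrix.vecMulVec c l := by rw [← hcl, add_sub_cancel]
  have hlc : l ⬝ᵥ c = 0 := by
    rwa [Matrix.vecMulVec_eq Unit, Matrix.det_one_add_replicateCol_mul_replicateRow,
      add_eq_left] at hdet
  have hsq : Matrix.vecMulVec c l * Matrix.vecMulVec c l = 0 := by
    rw [Matrix.vecMulVec_mul_vecMulVec, hlc, zero_smul, Matrix.vecMulVec_zero]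
  obtain ⟨m, hm, hpow⟩ := isOfFinOrder_iff_pow_eq_one.1 hA
  rw [one_add_pow_of_mul_self_eq_zero hsq, add_eq_left, ← Nat.cast_smul_eq_nsmul K,
    smul_eq_zero] at hpow
  have hzero := hpow.resolve_left (Nat.cast_ne_zero.2 hm.ne')
  simp [IsPseudoreflection, hzero] at hrefl

theorem exists_eq_C_mul_of_dvd_of_totalDegree_le_one {τ : Type*} [Field K] {p f : MvPolynomial τ K}
    (hp : ¬ IsUnit p) (hpf : p ∣ f) (hf : f.totalDegree ≤ 1) : ∃ c, f = C c * p := by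
  obtain ⟨q, rfl⟩ := hpf
  rcases eq_or_ne p 0 with rfl | hp0
  · exact ⟨0, by simp⟩
  rcases eq_or_ne q 0 with rfl | hq0
  · exact ⟨0, by simp⟩
  have hpdeg : p.totalDegree ≠ 0 := fun h0 => hp <| by
    rw [totalDegree_eq_zero_iff_eq_C.1 h0] at hp0 ⊢
    exact (isUnit_iff_ne_zero.2 fun h => hp0 (by rw [h, C_0])).map C
  rw [totalDegree_mul_of_isDomain hp0 hq0] at hf
  have hq : q = C (coeff 0 q) := totalDegree_eq_zero_iff_eq_C.1 (by omega)
  exact ⟨coeff 0 q, by rw [← hq, mul_comm]⟩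

theorem isPseudoreflection_of_dvd_linearSubst_X_sub_X [Field K] {A : Matrix σ σ K} (hA : A ≠ 1)
    {p : MvPolynomial σ K} (hp : ¬ IsUnit p) (hdvd : ∀ j, p ∣ linearSubst A (X j) - X j) :
    IsPseudoreflection A := by
  have hdeg (j : σ) : (linearSubst A (X j) - X j).totalDegree ≤ 1 :=
    ((isHomogeneous_linearSubst_X A j).sub (isHomogeneous_X K j)).totalDegree_le
  choose c hc using fun j =>
    exists_eq_C_mul_of_dvd_of_totalDegree_le_one hp (hdvd j) (hdeg j)
  have hAc : A - 1 = Matrix.vecMulVec c fun k => coeff (Finsupp.single k 1) p := by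
    ext j k
    have hjk := congrArg (coeff (Finsupp.single k 1)) (hc j)
    simpa [coeff_single_linearSubst_X, coeff_X, Finsupp.single_left_inj, coeff_C_mul,
      Matrix.vecMulVec_apply, Matrix.one_apply] using hjk
  refine le_antisymm (hAc ▸ Matrix.rank_vecMulVec_le _ _) (Nat.one_le_iff_ne_zero.2 fun h0 => hA ?_)
  rw [Matrix.rank, Submodule.finrank_eq_zero, LinearMap.range_eq_bot] at h0
  rw [← sub_eq_zero]
  exact Matrix.toLin'.map_eq_zero_iff.1 h0

end Pseudoreflection

section InvariantRing

variable {σ K : Type*} [Fintype σ] [DecidableEq σ]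

/-- The left action of `GL(V)` on `K[V]` is by pullback along the inverse. -/
noncomputable instance [CommRing K] :
    MulSemiringAction (Matrix.GeneralLinearGroup σ K) (MvPolynomial σ K) where
  smul γ f := linearSubst (γ⁻¹ : Matrix.GeneralLinearGroup σ K).val f
  one_smul f := by
    change linearSubst _ f = f
    rw [inv_one, Units.val_one, linearSubst_one]
  mul_smul γ δ f := by
    change linearSubst _ f = linearSubst _ (linearSubst _ f)
    rw [linearSubst_linearSubst, mul_inv_rev, Units.val_mul]
  smul_zero γ := map_zero _
  smul_add γ := map_add _
  smul_one γ := map_one _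
  smul_mul γ := map_mul _

theorem inv_smul_eq_linearSubst [CommRing K] (γ : Matrix.GeneralLinearGroup σ K)
    (f : MvPolynomial σ K) : γ⁻¹ • f = linearSubst γ.val f := by
  conv_rhs => rw [← inv_inv γ]
  rfl

instance [CommRing K] :
    FaithfulSMul (Matrix.GeneralLinearGroup σ K) (MvPolynomial σ K) where
  eq_of_smul_eq_smul {γ δ} h := by
    refine inv_injective (Units.ext (Matrix.ext fun j k => ?_))
    calc _ = _ := (coeff_single_linearSubst_X _ j k).symm
      _ = _ := congrArg (coeff (Finsupp.single k 1)) (h (X j))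
      _ = _ := coeff_single_linearSubst_X _ j k

instance [CommRing K] :
    SMulCommClass (Matrix.GeneralLinearGroup σ K) K (MvPolynomial σ K) where
  smul_comm γ := map_smul (linearSubst (γ⁻¹ : Matrix.GeneralLinearGroup σ K).val)

theorem inertia_span_singleton_eq_bot [Field K] {Γ : Subgroup (Matrix.GeneralLinearGroup σ K)}
    (hΓ : ∀ γ ∈ Γ, ¬ IsPseudoreflection γ.val) {p : MvPolynomial σ K} (hp : ¬ IsUnit p) :
    (Ideal.span {p}).inertia Γ = ⊥ := by
  refine (Subgroup.eq_bot_iff_forall _).2 fun γ hγ => by_contra fun hne => ?_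
  refine hΓ γ γ.2 (isPseudoreflection_of_dvd_linearSubst_X_sub_X (by simpa using hne) hp
    fun j => ?_)
  rw [← inv_smul_eq_linearSubst, ← Ideal.mem_span_singleton]
  exact inv_mem hγ (X j)

/-- The ring of invariants `K[V]^Γ` of a linear group `Γ ⊆ GL(V)`. -/
noncomputable def linearInvariants [CommRing K] (Γ : Subgroup (Matrix.GeneralLinearGroup σ K)) :
    Subalgebra K (MvPolynomial σ K) where
  carrier := {f | ∀ γ ∈ Γ, linearSubst γ.val f = f}
  mul_mem' hf hg γ hγ := by rw [map_mul, hf γ hγ, hg γ hγ]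
  add_mem' hf hg γ hγ := by rw [map_add, hf γ hγ, hg γ hγ]
  algebraMap_mem' c γ _ := (linearSubst γ.val).commutes c

instance [CommRing K] (Γ : Subgroup (Matrix.GeneralLinearGroup σ K)) :
    Algebra.IsInvariant (linearInvariants Γ) (MvPolynomial σ K) Γ where
  isInvariant f hf := by
    refine ⟨⟨f, fun γ hγ => ?_⟩, rfl⟩
    rw [← inv_smul_eq_linearSubst]
    exact hf ⟨γ, hγ⟩⁻¹

instance [CommRing K] (Γ : Subgroup (Matrix.GeneralLinearGroup σ K)) :
    SMulCommClass Γ (linearInvariants Γ) (MvPolynomial σ K) where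
  smul_comm γ a f := by
    have ha : γ • (a : MvPolynomial σ K) = a := a.2 _ (inv_mem γ.2)
    rw [Subalgebra.smul_def, Subalgebra.smul_def, smul_eq_mul, smul_eq_mul, smul_mul', ha]

theorem homogeneousComponent_mem_linearInvariants [CommRing K]
    {Γ : Subgroup (Matrix.GeneralLinearGroup σ K)} {f : MvPolynomial σ K}
    (hf : f ∈ linearInvariants Γ) (i : ℕ) : homogeneousComponent i f ∈ linearInvariants Γ :=
  fun γ hγ => by rw [← homogeneousComponent_linearSubst, hf γ hγ]

theorem exists_derivation_lift_of_forall_not_isPseudoreflection [Field K] [CharZero K]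
    {Γ : Subgroup (Matrix.GeneralLinearGroup σ K)} [Finite Γ]
    (hΓ : ∀ γ ∈ Γ, ¬ IsPseudoreflection γ.val)
    (D : Derivation K (linearInvariants Γ) (linearInvariants Γ)) :
    ∃ E : Derivation K (MvPolynomial σ K) (MvPolynomial σ K),
      ∀ a : linearInvariants Γ, E a = D a :=
  exists_derivation_lift_of_inertia_eq_bot
    (fun _ hπ => inertia_span_singleton_eq_bot hΓ hπ.not_isUnit)
    ((Algebra.linearMap (linearInvariants Γ) (MvPolynomial σ K)).compDer D)

theorem linearSubst_derivation [Field K] [Infinite K]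
    {Γ : Subgroup (Matrix.GeneralLinearGroup σ K)} [Finite Γ]
    {E : Derivation K (MvPolynomial σ K) (MvPolynomial σ K)}
    (hE : ∀ a ∈ linearInvariants Γ, E a ∈ linearInvariants Γ)
    {γ : Matrix.GeneralLinearGroup σ K} (hγ : γ ∈ Γ) (f : MvPolynomial σ K) :
    linearSubst γ.val (E f) = E (linearSubst γ.val f) := by
  have hcomm := smul_map_derivation_eq (A := linearInvariants Γ) (G := Γ)
    (MulSemiringAction.toAlgEquiv K (MvPolynomial σ K) γ⁻¹) 1 E
  simp only [MulSemiringAction.toAlgEquiv_apply, inv_smul_eq_linearSubst, one_smul] at hcomm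
  exact hcomm (fun a => ((hE a a.2) γ hγ).trans (congrArg E (a.2 γ hγ).symm)) f

theorem mulVec_eq_of_linearSubst_derivation {σ K : Type*} [Fintype σ] [CommSemiring K]
    {A : Matrix σ σ K} {E : Derivation K (MvPolynomial σ K) (MvPolynomial σ K)} {v : σ → K}
    (hv : ∀ j, E (X j) = C (v j)) (hA : ∀ f, linearSubst A (E f) = E (linearSubst A f)) :
    Matrix.mulVec A v = v := by
  refine funext fun j => C_injective σ K ?_
  calc C (Matrix.mulVec A v j) = ∑ k, A j k • E (X k) := by
        simp only [hv, smul_eq_C_mul, ← C_mul, ← map_sum]; rfl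
    _ = E (linearSubst A (X j)) := by rw [linearSubst_X, map_sum]; simp only [Derivation.map_smul]
    _ = linearSubst A (E (X j)) := (hA (X j)).symm
    _ = C (v j) := by rw [hv]; exact (linearSubst A).commutes (v j)

end InvariantRing

section NegativeDegree

variable {σ K : Type*}

/-- Homogeneity of degree `-k` for a derivation of a subalgebra of `K[V]`. Subtraction in `ℕ` is
truncated, so the vanishing of the graded pieces of negative degree is imposed separately. -/
def LowersDegreeBy [CommSemiring K] {A : Subalgebra K (MvPolynomial σ K)} (D : Derivation K A A)
    (k : ℕ) : Prop :=
  ∀ (i : ℕ) (f : A), (f : MvPolynomial σ K).IsHomogeneous i →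
    (k ≤ i → (D f : MvPolynomial σ K).IsHomogeneous (i - k)) ∧ (i < k → D f = 0)

variable [Fintype σ] [DecidableEq σ]

theorem pow_smul_linearSubst_scalar_derivation [CommSemiring K]
    {A : Subalgebra K (MvPolynomial σ K)} (hA : ∀ f ∈ A, ∀ i, homogeneousComponent i f ∈ A)
    {D : Derivation K A A} {k : ℕ} (hD : LowersDegreeBy D k)
    {E : Derivation K (MvPolynomial σ K) (MvPolynomial σ K)} (hE : ∀ a : A, E a = D a)
    (c : K) (a : A) :
    c ^ k • linearSubst (Matrix.scalar σ c) (E a) = E (linearSubst (Matrix.scalar σ c) a) := by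
  have hcomp (i : ℕ) : c ^ k • linearSubst (Matrix.scalar σ c) (E (homogeneousComponent i a)) =
      E (linearSubst (Matrix.scalar σ c) (homogeneousComponent i a)) := by
    have hi := homogeneousComponent_isHomogeneous i (a : MvPolynomial σ K)
    obtain ⟨hle, hlt⟩ := hD i ⟨_, hA a a.2 i⟩ hi
    rw [linearSubst_scalar_of_isHomogeneous c hi, Derivation.map_smul, hE ⟨_, hA a a.2 i⟩]
    rcases le_or_gt k i with hki | hik
    · rw [linearSubst_scalar_of_isHomogeneous c (hle hki), smul_smul, ← pow_add,
        Nat.add_sub_cancel' hki]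
    · simp [hlt hik]
  rw [← sum_homogeneousComponent (a : MvPolynomial σ K)]
  simp only [map_sum, Finset.smul_sum, hcomp]

theorem eq_C_of_two_pow_smul_linearSubst_scalar [CommRing K] [IsDomain K] [CharZero K] {k : ℕ}
    (hk : 1 ≤ k) {p : MvPolynomial σ K}
    (hp : (2 : K) ^ k • linearSubst (Matrix.scalar σ 2) p = (2 : K) • p) : p = C (coeff 0 p) := by
  ext u
  rw [coeff_C]
  split_ifs with hu
  · rw [hu]
  have hcoeff := congrArg (coeff u) hp
  rw [coeff_smul, coeff_linearSubst_scalar, coeff_smul, smul_eq_mul, smul_eq_mul, ← mul_assoc,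
    ← pow_add, mul_eq_mul_right_iff] at hcoeff
  refine hcoeff.resolve_left fun hpow => ?_
  have hdeg : u.degree ≠ 0 := fun h => hu (Finsupp.degree_eq_zero_iff u |>.1 h).symm
  have hlt : 2 ^ 1 < 2 ^ (k + u.degree) := Nat.pow_lt_pow_right one_lt_two (by omega)
  exact hlt.ne' (by exact_mod_cast hpow)

theorem derivation_X_eq_C [Field K] [CharZero K]
    {Γ : Subgroup (Matrix.GeneralLinearGroup σ K)} [Finite Γ]
    {D : Derivation K (linearInvariants Γ) (linearInvariants Γ)} {k : ℕ} (hk : 1 ≤ k)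
    (hD : LowersDegreeBy D k) {E : Derivation K (MvPolynomial σ K) (MvPolynomial σ K)}
    (hE : ∀ a : linearInvariants Γ, E a = D a) (j : σ) :
    E (X j) = C (coeff 0 (E (X j))) := by
  let δ : Matrix.GeneralLinearGroup σ K :=
    Units.map (Matrix.scalar σ).toMonoidHom (Units.mk0 2 two_ne_zero)
  have hδ (f : MvPolynomial σ K) : δ⁻¹ • f = linearSubst (Matrix.scalar σ 2) f :=
    inv_smul_eq_linearSubst δ f
  have hscale := smul_map_derivation_eq (A := linearInvariants Γ) (G := Γ)
    (MulSemiringAction.toAlgEquiv K (MvPolynomial σ K) δ⁻¹) (2 ^ k) E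
  simp only [MulSemiringAction.toAlgEquiv_apply, hδ] at hscale
  refine eq_C_of_two_pow_smul_linearSubst_scalar hk ?_
  calc (2 : K) ^ k • linearSubst (Matrix.scalar σ 2) (E (X j))
      = E (linearSubst (Matrix.scalar σ 2) (X j)) :=
        hscale (pow_smul_linearSubst_scalar_derivation
          (fun _ => homogeneousComponent_mem_linearInvariants) hD hE 2) (X j)
    _ = (2 : K) • E (X j) := by
        rw [linearSubst_scalar_of_isHomogeneous 2 (isHomogeneous_X K j), pow_one,
          Derivation.map_smul]

end NegativeDegree

theorem invariants_no_negative_poisson_derivation_general {σ K : Type*} [Fintype σ]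
    [DecidableEq σ] [Field K] [CharZero K] {Γ : Subgroup (Matrix.GeneralLinearGroup σ K)}
    [Finite Γ] (hΓ : ∀ γ ∈ Γ, ¬ IsPseudoreflection γ.val)
    (hfix : ∀ v : σ → K, (∀ γ ∈ Γ, Matrix.mulVec γ.val v = v) → v = 0)
    {k : ℕ} (hk : 1 ≤ k) (D : Derivation K (linearInvariants Γ) (linearInvariants Γ))
    (hD : LowersDegreeBy D k) : D = 0 := by
  obtain ⟨E, hE⟩ := exists_derivation_lift_of_forall_not_isPseudoreflection hΓ D
  have hEX := derivation_X_eq_C hk hD hE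
  have hEΓ (a) (ha : a ∈ linearInvariants Γ) : E a ∈ linearInvariants Γ :=
    hE ⟨a, ha⟩ ▸ (D ⟨a, ha⟩).2
  have hv : (fun j => coeff 0 (E (X j))) = 0 := hfix _ fun γ hγ =>
    mulVec_eq_of_linearSubst_derivation hEX (linearSubst_derivation hEΓ hγ)
  have hE0 : E = 0 := derivation_ext fun j => by
    rw [hEX, congrFun hv j, Pi.zero_apply, C_0, Derivation.zero_apply]
  ext a
  rw [← hE, hE0]
  rfl

/-- for a finite subgroup `Γ ⊆ Sp(V)` with `V^Γ = 0`, the graded Poisson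
algebra `ℂ[V]^Γ` (bracket of degree `-2`) has no nonzero Poisson derivation homogeneous of
negative degree `-k`, `k ≥ 1`. -/
theorem invariants_no_negative_poisson_derivation
    (n : ℕ) (Γ : Subgroup (GLn n)) (hfin : Finite Γ)
    (hsp : ∀ γ ∈ Γ, ((γ : GLn n) : Mn n) ∈ Matrix.symplecticGroup (Fin n) ℂ)
    (hfix : ∀ v : Vn n, (∀ γ ∈ Γ, Matrix.mulVec ((γ : GLn n) : Mn n) v = v) → v = 0)
    (k : ℕ) (hk : 1 ≤ k)
    (D : invariants n Γ →ₗ[ℂ] invariants n Γ)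
    -- `D` is a derivation
    (hder : ∀ f g : invariants n Γ, D (f * g) = f * D g + D f * g)
    -- `D` is a Poisson derivation for the restricted bracket
    (hpois : ∀ f g b : invariants n Γ, (b : Pn n) = pbracket n (f : Pn n) (g : Pn n) →
      ((D b : invariants n Γ) : Pn n)
        = pbracket n ((D f : invariants n Γ) : Pn n) (g : Pn n)
          + pbracket n (f : Pn n) ((D g : invariants n Γ) : Pn n))
    -- `D` is homogeneous of degree `-k`
    (hhom : ∀ (i : ℕ) (f : invariants n Γ), (f : Pn n).IsHomogeneous i →
      (k ≤ i → ((D f : invariants n Γ) : Pn n).IsHomogeneous (i - k)) ∧ (i < k → D f = 0)) :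
    D = 0 := by
  let D' : Derivation ℂ (invariants n Γ) (invariants n Γ) :=
    Derivation.mk' D fun f g => by rw [hder, smul_eq_mul, smul_eq_mul, mul_comm (D f)]
  have hΓ (γ : GLn n) (hγ : γ ∈ Γ) : ¬ IsPseudoreflection γ.val :=
    not_isPseudoreflection_of_det_eq_one (SymplecticGroup.det_eq_one (hsp γ hγ))
      (isOfFinOrder_val_of_mem hγ)
  have hD' : D' = 0 := invariants_no_negative_poisson_derivation_general hΓ hfix hk D' hhom
  exact congrArg Derivation.toLinearMap hD'
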